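/- arXiv:2101.06726 — 2 statements merged into one kernel-verified Lean document; each statement's English description precedes it below -/
import Mathlib

section
/- For every prime power q and every integer r ≥ 2 there exists a simple graph on n = (q^{r−1}+1)(q−1) vertices that is K_{r,(r−1)!+1}-free (contains no complete bipartite subgraph K_{r,(r−1)!+1}) and has at least (1/2)·(q^{2r−2}−1)(q−1) edges. -/
noncomputable section

open MvPolynomial

def normSys {K : Type*} [Field K] {k : ℕ} (a : Fin k → Fin k → K) (i : Fin k) :
    MvPolynomial (Fin k) K := ∏ j, (X j - C (a i j))

lemma normSys_integral {K : Type*} [Field K] {k : ℕ} (a : Fin k → Fin k → K)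
    (ha : ∀ i i' j, i ≠ i' → a i j ≠ a i' j) (A : Type*) [CommRing A] [Algebra K A]
    [Algebra A (MvPolynomial (Fin k) K)] [IsScalarTower K A (MvPolynomial (Fin k) K)]
    (hA : ∀ i, ∃ y : A, algebraMap A (MvPolynomial (Fin k) K) y = normSys a i) (j : Fin k) :
    IsIntegral A (X j : MvPolynomial (Fin k) K) := by
  set B := MvPolynomial (Fin k) K
  let L := FractionRing B
  have hinj : Function.Injective (algebraMap B L) := IsFractionRing.injective B L
  rw [← isIntegral_algebraMap_iff hinj]
  by_contra hx
  have : IsIntegrallyClosedIn (integralClosure A L).toSubring L :=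
    inferInstanceAs (IsIntegrallyClosedIn (integralClosure A L) L)
  obtain ⟨V, hV, hxV⟩ := Subring.exists_le_valuationSubring_of_isIntegrallyClosedIn
    (R := (integralClosure A L).toSubring) (x := algebraMap B L (X j)) hx
  have hAV : ∀ y : A, algebraMap B L (algebraMap A B y) ∈ V := by
    intro y
    apply hV
    change IsIntegral A _
    rw [← IsScalarTower.algebraMap_apply]
    exact isIntegral_algebraMap
  have hKV : ∀ c : K, algebraMap B L (C c) ∈ V := by
    intro c
    have := hAV (algebraMap K A c)
    rwa [← IsScalarTower.algebraMap_apply K A B] at this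
  have hv : ∀ c : K, V.valuation (algebraMap B L (C c)) ≤ 1 := fun c =>
    (V.valuation_le_one_iff _).2 (hKV c)
  have hv1 : ∀ c : K, c ≠ 0 → V.valuation (algebraMap B L (C c)) = 1 := by
    intro c hc
    have h1 : V.valuation (algebraMap B L (C c)) * V.valuation (algebraMap B L (C c⁻¹)) = 1 := by
      rw [← map_mul, ← map_mul, ← map_mul, mul_inv_cancel₀ hc]; simp
    refine le_antisymm (hv c) ?_
    rw [← h1]
    exact mul_le_of_le_one_right' (hv _)
  have hf : ∀ i, ∏ j, V.valuation (algebraMap B L (X j) - algebraMap B L (C (a i j))) ≤ 1 := by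
    intro i
    obtain ⟨y, hy⟩ := hA i
    have := (V.valuation_le_one_iff _).2 (hAV y)
    rw [hy, normSys] at this
    simpa using this
  have hj : 1 < V.valuation (algebraMap B L (X j)) := by
    rw [← not_le, V.valuation_le_one_iff]; exact hxV
  have hbig : ∀ i j, 1 < V.valuation (algebraMap B L (X j)) →
      1 < V.valuation (algebraMap B L (X j) - algebraMap B L (C (a i j))) := by
    intro i j h
    rwa [Valuation.map_sub_eq_of_lt_left]
    exact (hv _).trans_lt h
  -- every row has a small entry
  have hsm : ∀ i, ∃ j, V.valuation (algebraMap B L (X j) - algebraMap B L (C (a i j))) < 1 := by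
    intro i
    by_contra! h
    have := hf i
    rw [← Finset.mul_prod_erase _ _ (Finset.mem_univ j)] at this
    have h2 : 1 ≤ ∏ x ∈ Finset.univ.erase j,
      V.valuation (algebraMap B L (X x) - algebraMap B L (C (a i x))) :=
      Finset.one_le_prod' fun x _ => h x
    exact absurd this (not_le.2 ((hbig i j hj).trans_le (le_mul_of_one_le_right' h2)))
  choose g hg using hsm
  have hginj : Function.Injective g := by
    intro i i' h
    by_contra hne
    have h1 := hg i
    have h2 := hg i'
    rw [← h] at h2
    have h3 := V.valuation.map_sub_lt h2 h1
    have h4 := hv1 (a i (g i) - a i' (g i)) (sub_ne_zero.2 (ha _ _ _ hne))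
    rw [sub_sub_sub_cancel_left, ← map_sub, ← map_sub, h4] at h3
    exact lt_irrefl _ h3
  obtain ⟨i, hi⟩ := (Finite.injective_iff_surjective.1 hginj) j
  have h1 := hg i
  rw [hi] at h1
  exact lt_asymm h1 (hbig i j hj)

lemma normSys_algInd {K : Type*} [Field K] {k : ℕ} (a : Fin k → Fin k → K)
    (ha : ∀ i i' j, i ≠ i' → a i j ≠ a i' j) : AlgebraicIndependent K (normSys a) := by
  have h1 : Algebra.IsIntegral (Algebra.adjoin K (Set.range (normSys a)))
      (MvPolynomial (Fin k) K) := by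
    have h := normSys_integral a ha (Algebra.adjoin K (Set.range (normSys a)))
      (fun i => ⟨⟨normSys a i, Algebra.subset_adjoin ⟨i, rfl⟩⟩, rfl⟩)
    constructor
    intro p
    induction p using MvPolynomial.induction_on with
    | C c => exact isIntegral_algebraMap (x := algebraMap K _ c)
    | add p q hp hq => exact hp.add hq
    | mul_X p j hp => exact hp.mul (h j)
  have h2 : Algebra.IsAlgebraic (Algebra.adjoin K (Set.range (normSys a)))
      (MvPolynomial (Fin k) K) := inferInstance
  refine (Algebra.IsAlgebraic.isTranscendenceBasis_of_lift_le_trdeg_of_finite K (normSys a) ?_).1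
  rw [MvPolynomial.trdeg_of_isDomain]
  simp


lemma count_aux (k : ℕ) (c : ℕ) :
    ∃ M : ℕ, (M + c) ^ k < (M + k).choose k * (k.factorial + 1) := by
  have hlim : Filter.Tendsto (fun n : ℕ => (1 + (c : ℝ) / n) ^ k) Filter.atTop (nhds 1) := by
    have := ((tendsto_const_div_atTop_nhds_zero_nat (c : ℝ)).const_add 1).pow k
    simpa using this
  have hk : (0 : ℝ) < k.factorial := by exact_mod_cast k.factorial_pos
  have h1 : (1 : ℝ) < 1 + 1 / k.factorial := by
    have : 0 < 1 / (k.factorial : ℝ) := by positivity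
    linarith
  obtain ⟨n, hn, hn1⟩ := ((hlim.eventually_lt_const h1).and (Filter.eventually_ge_atTop 1)).exists
  obtain ⟨M, rfl⟩ : ∃ M, n = M + 1 := ⟨n - 1, by omega⟩
  refine ⟨M, ?_⟩
  have hM : (0 : ℝ) < ((M + 1 : ℕ) : ℝ) := by positivity
  have h2 : ((M + 1 + c : ℕ) : ℝ) ^ k * k.factorial < ((M + 1 : ℕ) : ℝ) ^ k * (k.factorial + 1) := by
    have e : ((M + 1 + c : ℕ) : ℝ) = ((M + 1 : ℕ) : ℝ) * (1 + (c : ℝ) / (M + 1 : ℕ)) := by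
      field_simp; push_cast; ring
    rw [e, mul_pow, mul_assoc]
    apply mul_lt_mul_of_pos_left _ (by positivity)
    calc _ < (1 + 1 / (k.factorial : ℝ)) * k.factorial := mul_lt_mul_of_pos_right hn hk
      _ = _ := by field_simp
  have h3 : (M + 1 + c) ^ k * k.factorial < (M + 1) ^ k * (k.factorial + 1) := by
    exact_mod_cast h2
  have h4 : (M + 1) ^ k ≤ k.factorial * (M + k).choose k := by
    rw [← Nat.ascFactorial_eq_factorial_mul_choose]
    exact Nat.pow_succ_le_ascFactorial _ _
  have h5 : (M + c) ^ k ≤ (M + 1 + c) ^ k := Nat.pow_le_pow_left (by omega) _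
  have h6 : (M + 1 + c) ^ k * k.factorial <
      ((M + k).choose k * (k.factorial + 1)) * k.factorial := by
    refine h3.trans_le ((Nat.mul_le_mul_right _ h4).trans (le_of_eq (by ring)))
  exact h5.trans_lt (Nat.lt_of_mul_lt_mul_right h6)

lemma exists_expSet (k M : ℕ) : ∃ E : Finset (Fin k →₀ ℕ), E.card = (M + k).choose k ∧
    ∀ e ∈ E, ∑ i, e i ≤ M := by
  classical
  refine ⟨(Finset.finsuppAntidiag (Finset.univ : Finset (Option (Fin k))) M).image
    Finsupp.some, ?_, ?_⟩
  · rw [Finset.card_image_of_injOn]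
    · rw [Finset.card_finsuppAntidiag_nat_eq_choose]
      simp only [Finset.card_univ, Fintype.card_option, Fintype.card_fin]
      rw [← Nat.choose_symm_add]
      congr 1
      omega
    · intro e he e' he' h
      simp only [Finset.mem_coe, Finset.mem_finsuppAntidiag,
        Fintype.sum_option] at he he'
      have hs : ∀ i, e (some i) = e' (some i) := fun i => DFunLike.congr_fun h i
      have h1 := he.1
      have h2 := he'.1
      simp only [hs] at h1
      ext o
      cases o with
      | none => omega
      | some i => exact hs i
  · intro e he
    obtain ⟨e', he', rfl⟩ := Finset.mem_image.1 he
    rw [Finset.mem_finsuppAntidiag, Fintype.sum_option] at he'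
    simp only [Finsupp.some_apply]
    omega

lemma degreeOf_normSys {K : Type*} [Field K] {k : ℕ} (a : Fin k → Fin k → K) (i j : Fin k) :
    degreeOf j (normSys a i) ≤ 1 := by
  classical
  refine (degreeOf_prod_le _ _ _).trans ?_
  calc _ ≤ ∑ x : Fin k, (if j = x then 1 else 0) := by
        refine Finset.sum_le_sum fun x _ => ?_
        refine (degreeOf_sub_le _ _ _).trans ?_
        simp [degreeOf_X]
    _ = 1 := by simp

lemma exists_rel {K : Type*} [Field K] {k : ℕ} (a : Fin k → Fin k → K) (j0 : Fin k) :
    ∃ P : Polynomial (MvPolynomial (Fin k) K), P ≠ 0 ∧ P.natDegree ≤ k.factorial ∧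
      P.eval₂ (aeval (normSys a) : _ →ₐ[K] MvPolynomial (Fin k) K).toRingHom (X j0) = 0 := by
  classical
  obtain ⟨M, hM⟩ := count_aux k (k.factorial + 1)
  obtain ⟨E, hE, hEM⟩ := exists_expSet k M
  set D := k.factorial with hD
  let φ : MvPolynomial (Fin k) K →ₐ[K] MvPolynomial (Fin k) K := aeval (normSys a)
  let T : (E × Fin (D + 1) → K) →ₗ[K] MvPolynomial (Fin k) K :=
    Fintype.linearCombination K (fun p : E × Fin (D + 1) =>
      φ (monomial p.1.1 1) * (X j0) ^ (p.2 : ℕ))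
  let F : MvPolynomial (Fin k) K →ₗ[K] ((Fin k → Fin (M + (D + 1))) → K) :=
    LinearMap.pi fun d => lcoeff K (Finsupp.equivFunOnFinite.symm fun i => (d i : ℕ))
  obtain ⟨c, hc, hc0⟩ : ∃ c, (F ∘ₗ T) c = 0 ∧ c ≠ 0 := by
    have : LinearMap.ker (F ∘ₗ T) ≠ ⊥ := by
      apply LinearMap.ker_ne_bot_of_finrank_lt
      simpa [hE] using hM
    obtain ⟨c, hc, h0⟩ := Submodule.exists_mem_ne_zero_of_ne_bot this
    exact ⟨c, hc, h0⟩
  have hdeg : ∀ j, degreeOf j (T c) < M + (D + 1) := by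
    intro j
    refine Nat.lt_succ_of_le ?_
    simp only [T, Fintype.linearCombination_apply]
    refine (degreeOf_sum_le _ _ _).trans (Finset.sup_le fun p _ => ?_)
    rw [smul_eq_C_mul]
    refine (degreeOf_C_mul_le _ _ _).trans ((degreeOf_mul_le _ _ _).trans (add_le_add ?_ ?_))
    · simp only [φ, aeval_monomial, map_one, one_mul]
      rw [Finsupp.prod_fintype _ _ (by simp)]
      refine (degreeOf_prod_le _ _ _).trans (le_trans ?_ (hEM _ p.1.2))
      refine Finset.sum_le_sum fun i _ => (degreeOf_pow_le _ _ _).trans ?_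
      simpa using Nat.mul_le_mul_left _ (degreeOf_normSys a i j)
    · refine (degreeOf_pow_le _ _ _).trans ?_
      have : degreeOf j (X j0 : MvPolynomial (Fin k) K) ≤ 1 := by
        rw [degreeOf_X]; split_ifs <;> simp
      calc _ ≤ (p.2 : ℕ) * 1 := Nat.mul_le_mul_left _ this
        _ ≤ D := by have := p.2.2; omega
  have hT : T c = 0 := by
    ext d
    rw [coeff_zero]
    by_contra hne
    have hd : ∀ j, d j < M + (D + 1) := fun j =>
      (le_degreeOf_of_mem_support j (mem_support_iff.2 hne)).trans_lt (hdeg j)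
    apply hne
    have := congrFun hc (fun j => ⟨d j, hd j⟩)
    simpa [F] using this
  let P : Polynomial (MvPolynomial (Fin k) K) :=
    ∑ p : E × Fin (D + 1), Polynomial.monomial (p.2 : ℕ) (monomial p.1.1 (c p))
  refine ⟨P, ?_, ?_, ?_⟩
  · intro hP
    apply hc0
    ext ⟨e, i⟩
    have h := congrArg (fun Q => coeff e.1 (Polynomial.coeff Q i)) hP
    simp only [P, Polynomial.finsetSum_coeff, Polynomial.coeff_monomial, coeff_sum,
      Polynomial.coeff_zero, coeff_zero] at h
    rw [Finset.sum_eq_single (e, i)] at h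
    · simpa using h
    · rintro ⟨e', i'⟩ - hne
      by_cases hi : i' = i
      · subst hi
        have : e'.1 ≠ e.1 := fun h => hne (by rw [Subtype.ext h])
        simp [coeff_monomial, this]
      · rw [if_neg (by simpa [Fin.ext_iff] using hi)]; simp
    · simp
  · refine Polynomial.natDegree_sum_le_of_forall_le _ _ fun p _ => ?_
    refine (Polynomial.natDegree_monomial_le _).trans ?_
    have := p.2.2; omega
  · rw [← hT]
    simp only [P, T, Polynomial.eval₂_finsetSum, Polynomial.eval₂_monomial,
      Fintype.linearCombination_apply]
    refine Finset.sum_congr rfl fun p _ => ?_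
    rw [← smul_mul_assoc, ← map_smul, smul_monomial, smul_eq_mul, mul_one]
    rfl

lemma exists_monic_of_rel (R S : Type*) [CommRing R] [IsDomain R] [IsIntegrallyClosed R]
    [CommRing S] [IsDomain S] [Algebra R S] (hinj : Function.Injective (algebraMap R S))
    (s : S) (hs : IsIntegral R s) (P : Polynomial R) (hP : P ≠ 0)
    (hPs : P.eval₂ (algebraMap R S) s = 0) :
    ∃ m : Polynomial R, m.Monic ∧ m.natDegree ≤ P.natDegree ∧
      m.eval₂ (algebraMap R S) s = 0 := by
  have : FaithfulSMul R S := (faithfulSMul_iff_algebraMap_injective R S).2 hinj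
  have : Module.IsTorsionFree R S := inferInstance
  exact ⟨minpoly R s, minpoly.monic hs,
    Polynomial.natDegree_le_of_dvd (minpoly.isIntegrallyClosed_dvd hs hPs) hP,
    minpoly.aeval R s⟩

lemma roots_bound {K : Type*} [Field K] {k : ℕ} (a : Fin k → Fin k → K)
    (ha : ∀ i i' j, i ≠ i' → a i j ≠ a i' j) (b : Fin k → K) (j0 : Fin k) (S : Finset K)
    (hS : ∀ s ∈ S, ∃ x : Fin k → K, x j0 = s ∧ ∀ i, ∏ j, (x j - a i j) = b i) :
    S.card ≤ k.factorial := by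
  classical
  let φ : MvPolynomial (Fin k) K →ₐ[K] MvPolynomial (Fin k) K := aeval (normSys a)
  have hφ : Function.Injective φ := normSys_algInd a ha
  obtain ⟨P, hP0, hPd, hPe⟩ := exists_rel a j0
  obtain ⟨m, hm, hdeg, hme⟩ : ∃ m : Polynomial (MvPolynomial (Fin k) K), m.Monic ∧
      m.natDegree ≤ P.natDegree ∧ m.eval₂ φ.toRingHom (X j0) = 0 := by
    let alg : Algebra (MvPolynomial (Fin k) K) (MvPolynomial (Fin k) K) := φ.toRingHom.toAlgebra
    have : @IsScalarTower K (MvPolynomial (Fin k) K) (MvPolynomial (Fin k) K) _ alg.toSMul _ :=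
      @IsScalarTower.of_algebraMap_eq K (MvPolynomial (Fin k) K) (MvPolynomial (Fin k) K)
        _ _ _ _ alg _ (fun c => (φ.commutes c).symm)
    have hint : @IsIntegral (MvPolynomial (Fin k) K) (MvPolynomial (Fin k) K) _ _ alg (X j0) := by
      exact @normSys_integral K _ k a ha (MvPolynomial (Fin k) K) _ _ alg _
        (fun i => ⟨X i, aeval_X _ i⟩) j0
    exact @exists_monic_of_rel (MvPolynomial (Fin k) K) (MvPolynomial (Fin k) K) _ _ _ _ _ alg
      hφ (X j0) hint P hP0 hPe
  let mb : Polynomial K := m.map (eval b)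
  have hmb : mb.Monic := hm.map _
  have hroot : ∀ s ∈ S, mb.IsRoot s := by
    intro s hs
    obtain ⟨x, hx, hxb⟩ := hS s hs
    have h1 := congrArg (eval x) hme
    rw [Polynomial.hom_eval₂, eval_X, map_zero, hx] at h1
    have h2 : (eval x).comp φ.toRingHom = eval b := by
      apply MvPolynomial.ringHom_ext
      · intro c; simp [φ]
      · intro i; simp [φ, normSys, hxb]
    rw [h2] at h1
    rwa [Polynomial.IsRoot, Polynomial.eval_map]
  calc S.card ≤ mb.natDegree := Polynomial.card_le_degree_of_subset_roots
        (fun s hs => (Polynomial.mem_roots hmb.ne_zero).2 (hroot s hs))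
    _ ≤ m.natDegree := Polynomial.natDegree_map_le
    _ ≤ _ := hdeg.trans hPd

lemma norm_sys_bound (F L : Type*) [Field F] [Field L] [Finite L] [Algebra F L] {k : ℕ}
    (hk : 0 < k) (hrank : Module.finrank F L = k) (c : Fin k → L) (hc : Function.Injective c)
    (d : Fin k → F) (S : Finset L)
    (hS : ∀ t ∈ S, ∀ i, Algebra.norm F (t + c i) = d i) : S.card ≤ k.factorial := by
  have := Finite.of_injective _ (FaithfulSMul.algebraMap_injective F L)
  have := Fintype.ofFinite F
  let σ : ℕ → L ≃ₐ[F] L := fun j => FiniteField.frobeniusAlgEquivOfAlgebraic F L ^ j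
  have hσ : ∀ j x, σ j x = x ^ (Nat.card F ^ j) := by
    intro j x
    simp only [σ]
    rw [AlgEquiv.coe_pow, FiniteField.coe_frobeniusAlgEquivOfAlgebraic_iterate,
      Fintype.card_eq_nat_card]
  refine roots_bound (fun i j => - σ j (c i)) ?_ (fun i => algebraMap F L (d i)) ⟨0, hk⟩ S ?_
  · intro i i' j hne h
    exact hne (hc ((σ j).injective (neg_injective h)))
  · intro t ht
    refine ⟨fun j => σ j t, by simp [σ], fun i => ?_⟩
    rw [← hS t ht i, FiniteField.algebraMap_norm_eq_prod_pow, hrank, Finset.prod_range]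
    refine Finset.prod_congr rfl fun j _ => ?_
    rw [sub_neg_eq_add, ← map_add, hσ]

/-- The symmetric pairing on the projective line with representatives `(1,a)` and `(0,1)`. -/
def pairing {L : Type*} [Field L] : Option L → Option L → L
  | some a, some b => a + b
  | some _, none => 1
  | none, some _ => 1
  | none, none => 0

lemma pairing_comm {L : Type*} [Field L] (x y : Option L) : pairing x y = pairing y x := by
  cases x <;> cases y <;> simp [pairing, add_comm]

lemma pairing_chart {L : Type*} [Field L] (p : Option L) : ∃ t c B : Option L → L,
    (∀ x, x ≠ p → B x ≠ 0) ∧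
    (∀ x y, x ≠ p → pairing p y ≠ 0 → pairing x y = pairing p y * B x * (t y + c x)) ∧
    (∀ x x', x ≠ p → x' ≠ p → c x = c x' → x = x') ∧
    (∀ y y', pairing p y ≠ 0 → pairing p y' ≠ 0 → t y = t y' → y = y') := by
  cases p with
  | none =>
    refine ⟨fun y => y.getD 0, fun x => x.getD 0, fun _ => 1, by simp, ?_, ?_, ?_⟩
    · rintro (_ | a) (_ | b) <;> simp [pairing, add_comm]
    · rintro (_ | a) (_ | b) <;> simp
    · rintro (_ | a) (_ | b) <;> simp [pairing]
  | some a0 =>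
    refine ⟨fun y => y.elim 0 (fun b => (a0 + b)⁻¹), fun x => x.elim 0 (fun a => (a - a0)⁻¹),
      fun x => x.elim 1 (fun a => a - a0), ?_, ?_, ?_, ?_⟩
    · rintro (_ | a) h
      · simp
      · simpa [sub_eq_zero] using h
    · rintro (_ | a) (_ | b) h h'
      · simp [pairing]
      · simp only [pairing] at h' ⊢
        simp [h']
      · have : a - a0 ≠ 0 := by simpa [sub_eq_zero] using h
        simp [pairing, this]
      · have : a - a0 ≠ 0 := by simpa [sub_eq_zero] using h
        simp only [pairing] at h' ⊢
        simp only [Option.elim_some]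
        field_simp
        ring
    · rintro (_ | a) (_ | b) h h' e
      · rfl
      · have : b - a0 ≠ 0 := by simpa [sub_eq_zero] using h'
        simp [eq_comm, this] at e
      · have : a - a0 ≠ 0 := by simpa [sub_eq_zero] using h
        simp [this] at e
      · simpa using e
    · rintro (_ | a) (_ | b) h h' e
      · rfl
      · simp only [pairing] at h'
        simp [eq_comm, h'] at e
      · simp only [pairing] at h
        simp [h] at e
      · simpa using e

/-- The projective norm graph, completed by the points at infinity. -/
def normGraph (F L : Type*) [Field F] [Field L] [Algebra F L] :
    SimpleGraph (Option L × Fˣ) where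
  Adj u v := u ≠ v ∧ Algebra.norm F (pairing u.1 v.1) * u.2 * v.2 = 1
  symm := ⟨fun u v h => ⟨h.1.symm, by rw [pairing_comm, mul_right_comm]; exact h.2⟩⟩
  loopless := ⟨fun u h => h.1 rfl⟩

lemma normGraph_pairing_ne {F L : Type*} [Field F] [Field L] [Finite L] [Algebra F L]
    {u v : Option L × Fˣ} (h : (normGraph F L).Adj u v) : pairing u.1 v.1 ≠ 0 := by
  intro h0
  have := h.2
  rw [h0, Algebra.norm_zero] at this
  simp at this

lemma normGraph_fst_inj {F L : Type*} [Field F] [Field L] [Algebra F L]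
    {u u' v : Option L × Fˣ} (h : (normGraph F L).Adj u v) (h' : (normGraph F L).Adj u' v)
    (e : u.1 = u'.1) : u = u' := by
  refine Prod.ext e (Units.ext ?_)
  have h1 := h.2
  have h2 := h'.2
  rw [← e] at h2
  have h3 := h1.trans h2.symm
  have hN : Algebra.norm F (pairing u.1 v.1) ≠ 0 := by
    intro h0; rw [h0] at h1; simp at h1
  exact mul_left_cancel₀ hN (mul_right_cancel₀ v.2.ne_zero h3)

lemma normGraph_free (F L : Type*) [Field F] [Field L] [Finite L] [Algebra F L] {k : ℕ}
    (hk : 0 < k) (hrank : Module.finrank F L = k) (u : Fin (k + 1) → Option L × Fˣ)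
    (v : Fin (k.factorial + 1) → Option L × Fˣ) (hu : Function.Injective u)
    (hv : Function.Injective v) (h : ∀ i j, (normGraph F L).Adj (u i) (v j)) : False := by
  classical
  obtain ⟨t, c, B, hB, hpair, hc, ht⟩ := pairing_chart (u 0).1
  have hne : ∀ i : Fin k, (u i.succ).1 ≠ (u 0).1 := fun i e =>
    Fin.succ_ne_zero i (hu (normGraph_fst_inj (h _ 0) (h _ 0) e))
  have hp : ∀ j, pairing (u 0).1 (v j).1 ≠ 0 := fun j => normGraph_pairing_ne (h 0 j)
  have htinj : Function.Injective fun j => t (v j).1 := fun j j' e =>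
    hv (normGraph_fst_inj (h 0 j).symm (h 0 j').symm (ht _ _ (hp j) (hp j') e))
  have hcinj : Function.Injective fun i : Fin k => c (u i.succ).1 := fun i i' e =>
    Fin.succ_injective _ (hu (normGraph_fst_inj (h _ 0) (h _ 0) (hc _ _ (hne i) (hne i') e)))
  have key := norm_sys_bound F L hk hrank (fun i => c (u i.succ).1) hcinj
    (fun i => (u 0).2 / (Algebra.norm F (B (u i.succ).1) * (u i.succ).2))
    (Finset.univ.image fun j => t (v j).1) ?_
  · rw [Finset.card_image_of_injective _ htinj] at key
    simp at key
  · intro s hs i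
    obtain ⟨j, -, rfl⟩ := Finset.mem_image.1 hs
    have h1 := (h 0 j).2
    have h2 := (h i.succ j).2
    rw [hpair _ _ (hne i) (hp j), map_mul, map_mul] at h2
    have hN0 : Algebra.norm F (pairing (u 0).1 (v j).1) ≠ 0 := by
      intro h0; rw [h0] at h1; simp at h1
    have hNB : Algebra.norm F (B (u i.succ).1) ≠ 0 := Algebra.norm_ne_zero_iff.2 (hB _ (hne i))
    have hu' := (u i.succ).2.ne_zero
    have hv' := (v j).2.ne_zero
    rw [eq_div_iff (mul_ne_zero hNB hu')]
    apply mul_left_cancel₀ (mul_ne_zero hN0 hv')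
    linear_combination h2 - h1

lemma normGraph_degree (F L : Type*) [Field F] [Field L] [Fintype L] [Fintype F] [Algebra F L]
    (u : Option L × Fˣ) [Fintype ((normGraph F L).neighborSet u)] :
    Fintype.card L - 1 ≤ (normGraph F L).degree u := by
  classical
  obtain ⟨b, hb⟩ : ∃ b : Option L, ∀ y, y ≠ b → pairing u.1 y ≠ 0 := by
    rcases u.1 with _ | a
    · refine ⟨none, ?_⟩
      rintro (_ | y) <;> simp [pairing]
    · refine ⟨some (-a), ?_⟩
      rintro (_ | y) hy
      · simp [pairing]
      · intro h
        exact hy (by rw [eq_neg_of_add_eq_zero_right h])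
  let g : Option L → Option L × Fˣ := fun y =>
    (y, if h : Algebra.norm F (pairing u.1 y) = 0 then 1 else (Units.mk0 _ h)⁻¹ * u.2⁻¹)
  have hg : Function.Injective g := fun y y' e => congrArg Prod.fst e
  have hsub : ((Finset.univ.erase b).image g).erase u ⊆ (normGraph F L).neighborFinset u := by
    intro w hw
    obtain ⟨hwu, hw⟩ := Finset.mem_erase.1 hw
    obtain ⟨y, hy, rfl⟩ := Finset.mem_image.1 hw
    have hy' := Algebra.norm_ne_zero_iff (R := F) |>.2 (hb y (Finset.mem_erase.1 hy).1)
    rw [SimpleGraph.mem_neighborFinset]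
    refine ⟨hwu.symm, ?_⟩
    have hu0 := u.2.ne_zero
    simp only [g, dif_neg hy', Units.val_mul, Units.val_inv_eq_inv_val, Units.val_mk0]
    field_simp
  rw [← SimpleGraph.card_neighborFinset_eq_degree]
  refine le_trans ?_ (Finset.card_le_card hsub)
  refine le_trans ?_ (Finset.pred_card_le_card_erase)
  rw [Finset.card_image_of_injective _ hg, Finset.card_erase_of_mem (Finset.mem_univ _)]
  simp

end

/-- For every prime power `q` and integer `r ≥ 2` there is a simple graph on
`n = (q^{r−1}+1)(q−1)` vertices that contains no `K_{r,(r−1)!+1}` subgraph and has at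
least `(q^{2r−2}−1)(q−1)/2` edges. -/
theorem exists_Kr_free_graph {q r : ℕ} (hq : IsPrimePow q) (hr : 2 ≤ r) :
    ∃ (V : Type) (_ : Fintype V) (G : SimpleGraph V),
      Fintype.card V = (q ^ (r - 1) + 1) * (q - 1) ∧
      (¬ ∃ (u : Fin r → V) (v : Fin ((r - 1).factorial + 1) → V),
        Function.Injective u ∧ Function.Injective v ∧
        (∀ i j, u i ≠ v j) ∧ (∀ i j, G.Adj (u i) (v j))) ∧
      (q ^ (2 * r - 2) - 1) * (q - 1) ≤ 2 * G.edgeSet.ncard := by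
  classical
  obtain ⟨k, rfl⟩ : ∃ k, r = k + 1 := ⟨r - 1, by omega⟩
  have hk : 0 < k := by omega
  obtain ⟨p, n, hp, hn, rfl⟩ := (isPrimePow_nat_iff q).1 hq
  have : Fact p.Prime := ⟨hp⟩
  have : NeZero k := ⟨hk.ne'⟩
  let F := GaloisField p n
  let L := FiniteField.Extension F p k
  have := Fintype.ofFinite F
  have := Fintype.ofFinite L
  have hF : Fintype.card F = p ^ n := by
    rw [Fintype.card_eq_nat_card, GaloisField.card p n hn.ne']
  have hL : Fintype.card L = (p ^ n) ^ k := by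
    rw [Fintype.card_eq_nat_card, FiniteField.natCard_extension, ← hF, Fintype.card_eq_nat_card]
  have hcard : Fintype.card (Option L × Fˣ) = ((p ^ n) ^ k + 1) * (p ^ n - 1) := by
    rw [Fintype.card_prod, Fintype.card_option, Fintype.card_units, hF, hL]
  refine ⟨Option L × Fˣ, inferInstance, normGraph F L, ?_, ?_, ?_⟩
  · simpa using hcard
  · rintro ⟨u, v, hu, hv, -, h⟩
    exact normGraph_free F L hk (FiniteField.finrank_extension F p k) u v hu hv h
  · have h1 := (normGraph F L).sum_degrees_eq_twice_card_edges
    rw [← SimpleGraph.coe_edgeFinset, Set.ncard_coe_finset, ← h1]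
    have h2 : ∑ v : Option L × Fˣ, (Fintype.card L - 1) ≤ ∑ v, (normGraph F L).degree v :=
      Finset.sum_le_sum fun v _ => normGraph_degree F L v
    refine le_trans (le_of_eq ?_) h2
    rw [Finset.sum_const, Finset.card_univ, hcard, hL, smul_eq_mul]
    have e : 2 * (k + 1) - 2 = k * 2 := by omega
    rw [e, pow_mul]
    have := Nat.sq_sub_sq ((p ^ n) ^ k) 1
    rw [one_pow] at this
    rw [this]
    ring
end

section
/- For an odd prime power q, the number of vertices ⟨x,y⟩ of the graph G(q², q+1) with x² + y² ∈ H (equivalently, the number of vertices of degree q²−1, where all other vertices have degree q²) is exactly q² − 1; for q = 2^k this number is exactly q². -/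
/-- The scaling relation by the subgroup `H ≤ Fˣ` on nonzero pairs of field elements:
`(a₁,b₁) ∼ (a₂,b₂)` iff there is `h ∈ H` with `a₁ = h·a₂` and `b₁ = h·b₂`. -/
def Grel {F : Type} [Field F] (H : Subgroup Fˣ) (p p' : {p : F × F // p ≠ 0}) : Prop :=
  ∃ h ∈ H, p.1.1 = (h : F) * p'.1.1 ∧ p.1.2 = (h : F) * p'.1.2

/-- The vertex set of the graph `G(q,t)`: nonzero pairs modulo scaling by `H`. -/
def GVertex (F : Type) [Field F] (H : Subgroup Fˣ) : Type :=
  Quot (Grel H)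

/-- Membership of a field element in the subgroup `H ≤ Fˣ`. -/
def memH {F : Type} [Field F] (H : Subgroup Fˣ) (x : F) : Prop :=
  ∃ h ∈ H, (h : F) = x

/-- Adjacency in the graph `G(q,t)`: `⟨a,b⟩` and `⟨x,y⟩` are adjacent iff `a·x + b·y ∈ H`
(this condition is independent of the chosen representatives). -/
def GAdj {F : Type} [Field F] (H : Subgroup Fˣ) (u v : GVertex F H) : Prop :=
  ∃ p p' : {p : F × F // p ≠ 0},
    u = Quot.mk (Grel H) p ∧ v = Quot.mk (Grel H) p' ∧
      memH H (p.1.1 * p'.1.1 + p.1.2 * p'.1.2)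

theorem Grel_equiv {F : Type} [Field F] (H : Subgroup Fˣ) : Equivalence (Grel H) := by
  refine ⟨fun p => ⟨1, H.one_mem, by simp, by simp⟩, ?_, ?_⟩
  · rintro p p' ⟨h, hh, h1, h2⟩
    exact ⟨h⁻¹, H.inv_mem hh, by simp [h1], by simp [h2]⟩
  · rintro a b c ⟨h, hh, h1, h2⟩ ⟨k, hk, k1, k2⟩
    exact ⟨h * k, H.mul_mem hh hk, by simp [h1, k1, mul_assoc], by simp [h2, k2, mul_assoc]⟩

theorem memH_ne {F : Type} [Field F] {H : Subgroup Fˣ} {p : F × F}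
    (h : memH H (p.1 ^ 2 + p.2 ^ 2)) : p ≠ 0 := by
  rintro rfl
  obtain ⟨h, _, e⟩ := h
  simp at e

theorem memH_scale {F : Type} [Field F] {H : Subgroup Fˣ} {x y : F} {k : Fˣ} (hk : k ∈ H)
    (h : memH H (x ^ 2 + y ^ 2)) : memH H ((k * x) ^ 2 + (k * y) ^ 2) := by
  obtain ⟨h, hh, e⟩ := h
  refine ⟨k * k * h, H.mul_mem (H.mul_mem hk hk) hh, ?_⟩
  push_cast
  rw [e]; ring

theorem card_S_eq {F : Type} [Field F] [Fintype F] (H : Subgroup Fˣ) :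
    {p : F × F | memH H (p.1 ^ 2 + p.2 ^ 2)}.ncard =
      {v : GVertex F H | ∃ p : {p : F × F // p ≠ 0},
        v = Quot.mk (Grel H) p ∧ memH H (p.1.1 ^ 2 + p.1.2 ^ 2)}.ncard * Nat.card H := by
  set T := {v : GVertex F H | ∃ p : {p : F × F // p ≠ 0},
        v = Quot.mk (Grel H) p ∧ memH H (p.1.1 ^ 2 + p.1.2 ^ 2)} with hT
  have key : ∀ p p' : {p : F × F // p ≠ 0}, Quot.mk (Grel H) p = Quot.mk (Grel H) p' →
      Grel H p p' := fun p p' e => (Equivalence.eqvGen_iff (Grel_equiv H)).1 (Quot.eqvGen_exact e)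
  have hout : ∀ v : GVertex F H, Quot.mk (Grel H) (Quot.out v) = v := fun v => Quot.out_eq v
  let f : T × H → F × F := fun a =>
    (((a.2 : Fˣ) : F) * (Quot.out a.1.1).1.1, ((a.2 : Fˣ) : F) * (Quot.out a.1.1).1.2)
  have hmem : ∀ v ∈ T, memH H ((Quot.out v).1.1 ^ 2 + (Quot.out v).1.2 ^ 2) := by
    rintro v ⟨p, e, hp⟩
    obtain ⟨k, hk, e1, e2⟩ := key _ _ ((hout v).trans e)
    rw [e1, e2]
    exact memH_scale hk hp
  have hinj : Function.Injective f := by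
    rintro ⟨⟨v, hv⟩, ⟨h, hh⟩⟩ ⟨⟨w, hw⟩, ⟨k, hk⟩⟩ e
    simp only [f, Prod.mk.injEq] at e
    obtain ⟨e1, e2⟩ := e
    have hvw : v = w := by
      rw [← hout v, ← hout w]
      refine Quot.sound ⟨h⁻¹ * k, H.mul_mem (H.inv_mem hh) hk, ?_, ?_⟩
      · push_cast; rw [mul_assoc, ← e1]; simp
      · push_cast; rw [mul_assoc, ← e2]; simp
    subst hvw
    have hne := (Quot.out v).2
    have : h = k := by
      by_contra hc
      have hc' : (h : F) ≠ k := fun e => hc (Units.ext e)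
      apply hne
      ext
      · by_contra h0; exact hc' (mul_right_cancel₀ h0 e1)
      · by_contra h0; exact hc' (mul_right_cancel₀ h0 e2)
    subst this
    rfl
  have hrange : Set.range f = {p : F × F | memH H (p.1 ^ 2 + p.2 ^ 2)} := by
    ext p
    constructor
    · rintro ⟨⟨⟨v, hv⟩, ⟨h, hh⟩⟩, rfl⟩
      exact memH_scale hh (hmem v hv)
    · intro hp
      let p' : {p : F × F // p ≠ 0} := ⟨p, memH_ne hp⟩
      obtain ⟨k, hk, e1, e2⟩ := key p' (Quot.out (Quot.mk (Grel H) p' : GVertex F H)) (hout _).symm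
      exact ⟨⟨⟨Quot.mk (Grel H) p', p', rfl, hp⟩, ⟨k, hk⟩⟩, Prod.ext e1.symm e2.symm⟩
  rw [← hrange, ← Nat.card_coe_set_eq, Nat.card_range_of_injective hinj, Nat.card_prod,
    Nat.card_coe_set_eq]

theorem card_S_odd {F : Type} [Field F] [Fintype F] (H : Subgroup Fˣ) (i : F) (hi : i * i = -1)
    (h2 : (2 : F) ≠ 0) :
    {p : F × F | memH H (p.1 ^ 2 + p.2 ^ 2)}.ncard = Nat.card H * (Fintype.card F - 1) := by
  have hi0 : i ≠ 0 := by rintro rfl; simp at hi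
  let f : H × Fˣ → F × F := fun a =>
    (((a.2 : F) + ((a.1 : Fˣ) : F) * ((a.2⁻¹ : Fˣ) : F)) / 2,
      ((a.2 : F) - ((a.1 : Fˣ) : F) * ((a.2⁻¹ : Fˣ) : F)) / (2 * i))
  have hp : ∀ a, (f a).1 + i * (f a).2 = a.2 := by
    intro a; simp only [f]; field_simp; ring
  have hm : ∀ a, (f a).1 - i * (f a).2 = ((a.1 : Fˣ) : F) * ((a.2⁻¹ : Fˣ) : F) := by
    intro a; simp only [f]; field_simp; ring
  have hfac : ∀ x y : F, x ^ 2 + y ^ 2 = (x + i * y) * (x - i * y) := by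
    intro x y; linear_combination y ^ 2 * hi
  have hinj : Function.Injective f := by
    rintro ⟨⟨h, hh⟩, u⟩ ⟨⟨k, hk⟩, w⟩ e
    have e1 := hp (⟨h, hh⟩, u)
    rw [e, hp] at e1
    have e1' : w = u := Units.ext e1
    subst e1'
    have e2 := hm (⟨h, hh⟩, w)
    rw [e, hm] at e2
    have e3 : k = h := Units.ext (mul_right_cancel₀ (Units.ne_zero _) e2)
    subst e3
    rfl
  have hrange : Set.range f = {p : F × F | memH H (p.1 ^ 2 + p.2 ^ 2)} := by
    ext p
    constructor
    · rintro ⟨a, rfl⟩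
      refine ⟨a.1, a.1.2, ?_⟩
      rw [hfac, hp, hm]
      rw [mul_left_comm]; simp
    · rintro ⟨h, hh, e⟩
      rw [hfac] at e
      have hu : p.1 + i * p.2 ≠ 0 := by
        intro h0; rw [h0, zero_mul] at e; exact h.ne_zero e
      refine ⟨(⟨h, hh⟩, Units.mk0 _ hu), ?_⟩
      have e' : (h : F) * (((Units.mk0 _ hu)⁻¹ : Fˣ) : F) = p.1 - i * p.2 := by
        rw [e, Units.val_inv_eq_inv_val, Units.val_mk0]; field_simp
      simp only [f, e']
      ext
      · simp only [Units.val_mk0]; field_simp; ring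
      · simp only [Units.val_mk0]; field_simp; ring
  classical
  rw [← hrange, ← Nat.card_coe_set_eq, Nat.card_range_of_injective hinj, Nat.card_prod,
    Nat.card_eq_fintype_card (α := Fˣ), Fintype.card_units]

theorem card_S_even {F : Type} [Field F] [Fintype F] (H : Subgroup Fˣ) (m : ℕ)
    (hm : Fintype.card F = 2 * m) (h2 : (2 : F) = 0) :
    {p : F × F | memH H (p.1 ^ 2 + p.2 ^ 2)}.ncard = Nat.card H * Fintype.card F := by
  let f : H × F → F × F := fun a => (((a.1 : Fˣ) : F) + a.2, a.2)
  have hinj : Function.Injective f := by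
    rintro ⟨⟨h, hh⟩, u⟩ ⟨⟨k, hk⟩, w⟩ e
    simp only [f, Prod.mk.injEq] at e
    obtain ⟨e1, rfl⟩ := e
    have e3 : h = k := Units.ext (add_right_cancel e1)
    subst e3
    rfl
  have hrange : Set.range f = {p : F × F | memH H (p.1 ^ 2 + p.2 ^ 2)} := by
    ext p
    constructor
    · rintro ⟨⟨⟨h, hh⟩, u⟩, rfl⟩
      refine ⟨h * h, H.mul_mem hh hh, ?_⟩
      simp only [f]
      push_cast
      linear_combination -((h : F) * u + u ^ 2) * h2
    · rintro ⟨h, hh, e⟩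
      refine ⟨(⟨h ^ m, H.pow_mem hh m⟩, p.2), ?_⟩
      have e' : (h : F) ^ m = p.1 - p.2 := by
        have : (h : F) = (p.1 - p.2) ^ 2 := by
          rw [e]; linear_combination (p.1 * p.2) * h2
        rw [this, ← pow_mul, ← hm, FiniteField.pow_card]
      simp only [f]
      ext
      · simp [e']
      · rfl
  rw [← hrange, ← Nat.card_coe_set_eq, Nat.card_range_of_injective hinj, Nat.card_prod,
    Nat.card_eq_fintype_card (α := F)]

/-- In the graph `G(q², q+1)`, the number of vertices `⟨x,y⟩` with `x² + y² ∈ H`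
(equivalently the number of vertices of degree `q²−1`, all other vertices having degree
`q²`) equals `q² − 1` when `q` is odd, and equals `q²` when `q = 2^k`. -/
theorem card_special_vertices {q : ℕ} (hq : IsPrimePow q)
    {F : Type} [Field F] [Fintype F] (hF : Fintype.card F = q ^ 2)
    (H : Subgroup Fˣ) (hH : Nat.card H = q + 1) :
    (Odd q →
      {v : GVertex F H | ∃ p : {p : F × F // p ≠ 0},
        v = Quot.mk (Grel H) p ∧ memH H (p.1.1 ^ 2 + p.1.2 ^ 2)}.ncard = q ^ 2 - 1) ∧
    ((∃ k, q = 2 ^ k) →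
      {v : GVertex F H | ∃ p : {p : F × F // p ≠ 0},
        v = Quot.mk (Grel H) p ∧ memH H (p.1.1 ^ 2 + p.1.2 ^ 2)}.ncard = q ^ 2) := by
  have hS := card_S_eq H
  have hpos : 0 < q + 1 := Nat.succ_pos q
  constructor
  · intro hodd
    have hodd2 : Odd (q ^ 2) := hodd.pow
    have h2 : (2 : F) ≠ 0 := by
      apply Ring.two_ne_zero
      intro hc
      have := FiniteField.even_card_of_char_two hc
      rw [hF] at this
      rw [Nat.odd_iff] at hodd2
      omega
    have hsq : IsSquare (-1 : F) := by
      rw [FiniteField.isSquare_neg_one_iff, hF]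
      obtain ⟨r, rfl⟩ := hodd
      have : (2 * r + 1) ^ 2 = 4 * (r ^ 2 + r) + 1 := by ring
      omega
    obtain ⟨i, hi⟩ := hsq
    rw [card_S_odd H i hi.symm h2, hH, hF, mul_comm] at hS
    exact (Nat.eq_of_mul_eq_mul_right hpos hS).symm
  · rintro ⟨k, hk⟩
    have hk0 : k ≠ 0 := by
      rintro rfl
      exact hq.ne_one (by simpa using hk)
    obtain ⟨j, rfl⟩ := Nat.exists_eq_succ_of_ne_zero hk0
    have hm : Fintype.card F = 2 * (2 ^ j * q) := by
      rw [hF, hk, Nat.succ_eq_add_one]; ring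
    have h2 : (2 : F) = 0 := by
      have h0 : ((Fintype.card F : ℕ) : F) = 0 := FiniteField.cast_card_eq_zero F
      rw [hF, hk] at h0
      push_cast at h0
      exact pow_eq_zero_iff (by simp) |>.1 (pow_eq_zero_iff (by simp) |>.1 h0)
    rw [card_S_even H _ hm h2, hH, hF, mul_comm] at hS
    exact (Nat.eq_of_mul_eq_mul_right hpos hS).symm
end
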